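/- arXiv:1002.4854 — 5 statements merged into one kernel-verified Lean document; each statement's English description precedes it below -/
import Mathlib

section
/- Let 𝔤 be a finite-dimensional Lie algebra over a field k of characteristic 0 and let (h,e,f) be an sl₂-triple in 𝔤. Then the dimension of ker((ad e)²) equals dim 𝔤(0) + 2·dim 𝔤(1) + dim 𝔤(2), and this number also equals dim 𝔤^e + dim 𝔤^e_nil. -/
open LieAlgebra Module

lemma Submodule.finrank_map_add_finrank_ker_inf {k V W : Type*} [Field k] [AddCommGroup V]
    [Module k V] [AddCommGroup W] [Module k W] [FiniteDimensional k V] (φ : V →ₗ[k] W)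
    (p : Submodule k V) :
    finrank k (p.map φ) + finrank k (LinearMap.ker φ ⊓ p : Submodule k V) = finrank k p := by
  rw [← LinearMap.finrank_range_add_finrank_ker (φ.domRestrict p), LinearMap.range_domRestrict,
    LinearMap.ker_domRestrict, inf_comm, ← Submodule.map_comap_subtype,
    Submodule.finrank_map_subtype_eq]

namespace IsSl2Triple

open LieModule

variable {k L M : Type*} [Field k] [LieRing L] [LieAlgebra k L]
  [AddCommGroup M] [Module k M] [LieRingModule L M] [LieModule k L M]

variable (k M) in
/-- The sum of the eigenspaces of `h` on `M` whose eigenvalues are the integers in `s`. -/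
def weightSum (h : L) (s : Set ℤ) : Submodule k M :=
  ⨆ i ∈ s, (toEnd k L M h).eigenspace (i : k)

lemma mem_weightSum_of_lie_eq {h : L} {s : Set ℤ} {i : ℤ} (hi : i ∈ s) {x : M}
    (hx : ⁅h, x⁆ = (i : k) • x) : x ∈ weightSum k M h s :=
  Submodule.mem_iSup_of_mem i (Submodule.mem_iSup_of_mem hi (Module.End.mem_eigenspace_iff.mpr hx))

lemma weightSum_le {h : L} {s : Set ℤ} {N : Submodule k M}
    (hN : ∀ i ∈ s, ∀ x : M, ⁅h, x⁆ = (i : k) • x → x ∈ N) : weightSum k M h s ≤ N :=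
  iSup₂_le fun i hi x hx ↦ hN i hi x (Module.End.mem_eigenspace_iff.mp hx)

lemma weightSum_mono {h : L} {s t : Set ℤ} (hst : s ⊆ t) :
    weightSum k M h s ≤ weightSum k M h t :=
  biSup_mono fun _ hi ↦ hst hi

lemma weightSum_neg_le {h : L} {s t : Set ℤ} (hst : ∀ i ∈ s, -i ∈ t) :
    weightSum k M (-h) s ≤ weightSum k M h t := by
  refine weightSum_le fun i hi x hx ↦ mem_weightSum_of_lie_eq (hst i hi) ?_
  rw [neg_lie] at hx
  rw [← neg_neg ⁅h, x⁆, hx]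
  push_cast
  rw [neg_smul]

lemma exists_lie_sub_smul_eq [CharZero k] {h : L} {s : Set ℤ} {j : ℤ} (hj : j ∉ s) {x : M}
    (hx : x ∈ weightSum k M h s) : ∃ z ∈ weightSum k M h s, ⁅h, z⁆ - (j : k) • z = x := by
  suffices weightSum k M h s ≤
      (weightSum k M h s).map (toEnd k L M h - algebraMap k (End k M) (j : k)) by
    exact Submodule.mem_map.mp (this hx)
  refine weightSum_le fun i hi y hy ↦ ?_
  have hij : (i : k) - j ≠ 0 := by
    rw [sub_ne_zero]
    exact fun hij ↦ hj (Int.cast_injective hij ▸ hi)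
  refine ⟨((i : k) - j)⁻¹ • y, Submodule.smul_mem _ _ (mem_weightSum_of_lie_eq hi hy), ?_⟩
  simp only [map_smul, LinearMap.sub_apply, toEnd_apply_apply, algebraMap_end_apply, hy]
  rw [← sub_smul, inv_smul_smul₀ hij]

lemma disjoint_weightSum [CharZero k] {h : L} {s t : Set ℤ} (hst : Disjoint s t) :
    Disjoint (weightSum k M h s) (weightSum k M h t) :=
  ((toEnd k L M h).eigenspaces_iSupIndep.comp (Int.cast_injective (α := k))).disjoint_biSup_biSup
    hst

lemma weightSum_Ici_eq_sup (h : L) (m : ℤ) :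
    weightSum k M h (Set.Ici m) = weightSum k M h {m} ⊔ weightSum k M h (Set.Ici (m + 1)) := by
  have hm : Set.Ici m = {m} ∪ Set.Ici (m + 1) := by
    ext i
    simp
    omega
  rw [hm, weightSum, iSup_union]
  rfl

lemma finrank_weightSum_Ici [CharZero k] [FiniteDimensional k M] (h : L) (m : ℤ) :
    finrank k (weightSum k M h (Set.Ici m)) =
      finrank k ((toEnd k L M h).eigenspace (m : k)) +
        finrank k (weightSum k M h (Set.Ici (m + 1))) := by
  have h₁ : (toEnd k L M h).eigenspace (m : k) = weightSum k M h {m} := by simp [weightSum]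
  have h₃ : Disjoint (weightSum k M h {m}) (weightSum k M h (Set.Ici (m + 1))) :=
    disjoint_weightSum (by simp)
  rw [h₁, weightSum_Ici_eq_sup, ← Submodule.finrank_sup_add_finrank_inf_eq, h₃.eq_bot,
    finrank_bot, add_zero]

variable {h e f : L}

lemma lie_e_pow_succ_toEnd_f (t : IsSl2Triple h e f) (n : ℕ) (y : M) :
    ⁅e, (toEnd k L M f ^ (n + 1)) y⁆ = (toEnd k L M f ^ (n + 1)) ⁅e, y⁆ +
      ((n : k) + 1) • (toEnd k L M f ^ n) (⁅h, y⁆ - (n : k) • y) := by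
  induction n generalizing y with
  | zero =>
    simp [leibniz_lie e, t.lie_e_f, add_comm]
  | succ n ih =>
    have hef : ⁅e, ⁅f, y⁆⁆ = ⁅h, y⁆ + ⁅f, ⁅e, y⁆⁆ := by rw [leibniz_lie, t.lie_e_f]
    have hhf : ⁅h, ⁅f, y⁆⁆ = ⁅f, ⁅h, y⁆⁆ - (2 : k) • ⁅f, y⁆ := by
      rw [leibniz_lie, t.lie_lie_smul_f k, neg_lie, smul_lie]; abel
    have hpow (m : ℕ) (z : M) :
        (toEnd k L M f ^ (m + 1)) z = (toEnd k L M f ^ m) ⁅f, z⁆ := by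
      simp [pow_succ]
    rw [hpow (n + 1) y, ih, hef, hhf, hpow (n + 1) ⁅e, y⁆]
    simp only [map_add, map_sub, map_smul]
    simp only [hpow n]
    push_cast
    module

lemma isNilpotent_toEnd_e [CharZero k] [FiniteDimensional k M] (t : IsSl2Triple h e f) :
    IsNilpotent (toEnd k L M e) := by
  by_contra hE
  have hne (n : ℕ) : toEnd k L M e ^ n ≠ 0 := fun hn ↦ hE ⟨n, hn⟩
  have hcomm : toEnd k L M h * toEnd k L M e =
      toEnd k L M e * toEnd k L M h + (2 : k) • toEnd k L M e := by
    ext x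
    simp [leibniz_lie h, t.lie_h_e_smul k, add_comm]
  have key (n : ℕ) : toEnd k L M h * toEnd k L M e ^ n =
      toEnd k L M e ^ n * toEnd k L M h + (2 * n : k) • toEnd k L M e ^ n := by
    induction n with
    | zero => simp
    | succ n ih =>
      rw [pow_succ, ← mul_assoc, ih, add_mul, mul_assoc, hcomm, mul_add, ← mul_assoc,
        smul_mul_assoc, mul_smul_comm]
      push_cast
      module
  have hli := Module.End.eigenvectors_linearIndependent'
    (LinearMap.mulLeft k (toEnd k L M h) - LinearMap.mulRight k (toEnd k L M h))
    (fun n : ℕ ↦ (2 * n : k)) (fun a b hab ↦ by simpa using hab)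
    (fun n ↦ toEnd k L M e ^ n) (fun n ↦ ⟨by
      rw [Module.End.mem_eigenspace_iff]
      simp [key], hne n⟩)
  have := hli.finite
  exact not_finite ℕ

lemma lie_e_mem_weightSum (t : IsSl2Triple h e f) {s s' : Set ℤ} (hs : ∀ i ∈ s, i + 2 ∈ s')
    {x : M} (hx : x ∈ weightSum k M h s) : ⁅e, x⁆ ∈ weightSum k M h s' := by
  suffices weightSum k M h s ≤ (weightSum k M h s').comap (toEnd k L M e) from this hx
  refine weightSum_le fun i hi y hy ↦ mem_weightSum_of_lie_eq (hs i hi) ?_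
  rw [toEnd_apply_apply, leibniz_lie, hy, t.lie_h_e_smul k, smul_lie, lie_smul]
  push_cast
  module

lemma lie_f_mem_weightSum (t : IsSl2Triple h e f) {s s' : Set ℤ} (hs : ∀ i ∈ s, i - 2 ∈ s')
    {x : M} (hx : x ∈ weightSum k M h s) : ⁅f, x⁆ ∈ weightSum k M h s' := by
  suffices weightSum k M h s ≤ (weightSum k M h s').comap (toEnd k L M f) from this hx
  refine weightSum_le fun i hi y hy ↦ mem_weightSum_of_lie_eq (hs i hi) ?_
  rw [toEnd_apply_apply, leibniz_lie, hy, t.lie_lie_smul_f k, neg_lie, smul_lie, lie_smul]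
  push_cast
  module

variable [CharZero k]

lemma mem_weightSum_of_pow_mul_pow_eq_zero (t : IsSl2Triple h e f) (n : ℕ) {y : M}
    (hy : ⁅f, ⁅e, y⁆⁆ = 0) (hn : (toEnd k L M e ^ n) ((toEnd k L M f ^ n) y) = 0) :
    y ∈ weightSum k M h (Set.Ico 0 (n : ℤ)) := by
  induction n generalizing y with
  | zero =>
    have : y = 0 := by simpa using hn
    simp [this]
  | succ n ih =>
    have hn₀ : (n : k) + 1 ≠ 0 := by exact_mod_cast n.succ_ne_zero
    have hfe : ⁅f, ⁅e, ⁅h, y⁆ - (n : k) • y⁆⁆ = 0 := by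
      have h₁ : ⁅e, ⁅h, y⁆⁆ = ⁅h, ⁅e, y⁆⁆ - (2 : k) • ⁅e, y⁆ := by
        rw [leibniz_lie h e, t.lie_h_e_smul k, smul_lie]; abel
      have h₂ : ⁅f, ⁅h, ⁅e, y⁆⁆⁆ = 0 := by
        rw [leibniz_lie f h, hy, lie_zero, add_zero, ← lie_skew, t.lie_lie_smul_f k, neg_neg,
          smul_lie, hy, smul_zero]
      simp [h₁, h₂, hy]
    have hen : (toEnd k L M e ^ n) ((toEnd k L M f ^ n) (⁅h, y⁆ - (n : k) • y)) = 0 := by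
      rw [pow_succ, Module.End.mul_apply, toEnd_apply_apply, t.lie_e_pow_succ_toEnd_f,
        pow_succ (toEnd k L M f), Module.End.mul_apply, toEnd_apply_apply, hy, map_zero, zero_add,
        map_smul, smul_eq_zero] at hn
      exact hn.resolve_left hn₀
    obtain ⟨z, hz, hzy⟩ := exists_lie_sub_smul_eq (j := n) (by simp) (ih hfe hen)
    rw [← sub_add_cancel y z]
    refine add_mem (mem_weightSum_of_lie_eq (i := n) (by simp) ?_)
      (weightSum_mono (Set.Ico_subset_Ico_right (by simp)) hz)
    rw [Int.cast_natCast] at hzy ⊢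
    rw [lie_sub, smul_sub, sub_eq_sub_iff_sub_eq_sub, hzy]

variable [FiniteDimensional k M]

lemma mem_weightSum_Ici_of_lie_f_lie_e_eq_zero (t : IsSl2Triple h e f) {y : M}
    (hy : ⁅f, ⁅e, y⁆⁆ = 0) : y ∈ weightSum k M h (Set.Ici 0) := by
  obtain ⟨n, hn⟩ := t.symm.isNilpotent_toEnd_e (k := k) (M := M)
  exact weightSum_mono (fun _ hi ↦ hi.1)
    (t.mem_weightSum_of_pow_mul_pow_eq_zero n hy (by simp [hn]))

lemma mem_weightSum_Iic_of_lie_e_lie_f_eq_zero (t : IsSl2Triple h e f) {y : M}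
    (hy : ⁅e, ⁅f, y⁆⁆ = 0) : y ∈ weightSum k M h (Set.Iic 0) :=
  weightSum_neg_le (by simp) (t.symm.mem_weightSum_Ici_of_lie_f_lie_e_eq_zero hy)

lemma toEnd_e_eq_zero_of_lie_f_lie_e_eq_zero (t : IsSl2Triple h e f) {y : M}
    (hy : ⁅f, ⁅e, y⁆⁆ = 0) : toEnd k L M e y = 0 := by
  have h₁ : ⁅e, y⁆ ∈ weightSum k M h (Set.Ici 2) :=
    t.lie_e_mem_weightSum (by simp) (t.mem_weightSum_Ici_of_lie_f_lie_e_eq_zero hy)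
  have h₂ : ⁅e, y⁆ ∈ weightSum k M h (Set.Iic 0) :=
    t.mem_weightSum_Iic_of_lie_e_lie_f_eq_zero (by rw [hy, lie_zero])
  refine Submodule.disjoint_def.mp (disjoint_weightSum ?_) _ h₁ h₂
  exact Set.disjoint_left.mpr fun i hi hi' ↦ by simp at hi hi'; omega

lemma map_toEnd_e_weightSum_Ici (t : IsSl2Triple h e f) {m : ℤ} (hm : -1 ≤ m) :
    (weightSum k M h (Set.Ici m)).map (toEnd k L M e) = weightSum k M h (Set.Ici (m + 2)) := by
  refine le_antisymm ?_ fun x hx ↦ ?_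
  · rintro - ⟨x, hx, rfl⟩
    exact t.lie_e_mem_weightSum (by simp) hx
  · have hf {y : M} (hy : y ∈ weightSum k M h (Set.Ici (m + 2))) :
        ⁅f, y⁆ ∈ weightSum k M h (Set.Ici m) :=
      t.lie_f_mem_weightSum (fun i hi ↦ by simp at hi ⊢; omega) hy
    have hmaps : Set.MapsTo (toEnd k L M e * toEnd k L M f)
        (weightSum k M h (Set.Ici (m + 2))) (weightSum k M h (Set.Ici (m + 2))) :=
      fun y hy ↦ t.lie_e_mem_weightSum (by simp) (hf hy)
    have hinj : Set.InjOn (toEnd k L M e * toEnd k L M f)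
        (weightSum k M h (Set.Ici (m + 2))) := by
      refine LinearMap.injOn_of_disjoint_ker subset_rfl ?_
      refine (disjoint_weightSum (t := Set.Iic 0) ?_).mono_right fun y hy ↦
        t.mem_weightSum_Iic_of_lie_e_lie_f_eq_zero hy
      exact Set.disjoint_left.mpr fun i hi hi' ↦ by simp at hi hi'; omega
    obtain ⟨y, hy, rfl⟩ := (LinearMap.injOn_iff_surjOn hmaps).mp hinj hx
    exact ⟨⁅f, y⁆, hf hy, rfl⟩

lemma finrank_ker_toEnd_e_inf_weightSum_Ici (t : IsSl2Triple h e f) {m : ℤ} (hm : -1 ≤ m) :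
    finrank k (LinearMap.ker (toEnd k L M e) ⊓ weightSum k M h (Set.Ici m) : Submodule k M) =
      finrank k ((toEnd k L M h).eigenspace (m : k)) +
        finrank k ((toEnd k L M h).eigenspace ((m + 1 : ℤ) : k)) := by
  have h₁ := Submodule.finrank_map_add_finrank_ker_inf (toEnd k L M e)
    (weightSum k M h (Set.Ici m))
  have h₂ := finrank_weightSum_Ici (k := k) (M := M) h m
  have h₃ := finrank_weightSum_Ici (k := k) (M := M) h (m + 1)
  rw [t.map_toEnd_e_weightSum_Ici hm] at h₁
  rw [show m + 1 + 1 = m + 2 by ring] at h₃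
  omega

lemma ker_inf_range_toEnd_e (t : IsSl2Triple h e f) :
    LinearMap.ker (toEnd k L M e) ⊓ LinearMap.range (toEnd k L M e) =
      LinearMap.ker (toEnd k L M e) ⊓ weightSum k M h (Set.Ici 1) := by
  have hle : weightSum k M h (Set.Ici 1) ≤ LinearMap.range (toEnd k L M e) := by
    have := t.map_toEnd_e_weightSum_Ici (k := k) (M := M) le_rfl
    norm_num at this
    exact this ▸ LinearMap.map_le_range
  refine le_antisymm (le_inf inf_le_left ?_) (inf_le_inf_left _ hle)
  rintro x ⟨hx, hx'⟩
  have hx₀ : x ∈ weightSum k M h (Set.Ici 0) :=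
    t.mem_weightSum_Ici_of_lie_f_lie_e_eq_zero (by rw [show ⁅e, x⁆ = 0 from hx, lie_zero])
  rw [weightSum_Ici_eq_sup] at hx₀
  obtain ⟨a, ha, b, hb, rfl⟩ := Submodule.mem_sup.mp hx₀
  rw [zero_add] at hb
  have hea : ⁅e, a⁆ = 0 := by
    have h₁ : ⁅e, a⁆ ∈ weightSum k M h {2} := t.lie_e_mem_weightSum (by simp) ha
    have h₂ : ⁅e, a⁆ ∈ weightSum k M h (Set.Ici 3) := by
      have hab : ⁅e, a⁆ + ⁅e, b⁆ = 0 := by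
        rw [← lie_add]
        exact hx
      rw [eq_neg_of_add_eq_zero_left hab]
      exact neg_mem (t.lie_e_mem_weightSum (fun i hi ↦ by simp at hi ⊢; omega) hb)
    exact Submodule.disjoint_def.mp (disjoint_weightSum (by simp)) _ h₁ h₂
  have hha : ⁅h, a⁆ = 0 := by
    simpa [weightSum] using ha
  have hfa : ⁅f, a⁆ = 0 :=
    t.symm.toEnd_e_eq_zero_of_lie_f_lie_e_eq_zero (k := k) (by
      rw [leibniz_lie, t.lie_e_f, hha, hea, lie_zero, add_zero])
  obtain ⟨c, rfl⟩ : a ∈ LinearMap.range (toEnd k L M e) := by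
    simpa using sub_mem hx' (hle hb)
  have hc : toEnd k L M e c = 0 := t.toEnd_e_eq_zero_of_lie_f_lie_e_eq_zero (k := k) hfa
  rwa [hc, zero_add]

lemma finrank_ker_toEnd_e (t : IsSl2Triple h e f) :
    finrank k (LinearMap.ker (toEnd k L M e)) =
      finrank k ((toEnd k L M h).eigenspace ((0 : ℤ) : k)) +
        finrank k ((toEnd k L M h).eigenspace ((1 : ℤ) : k)) := by
  have hle : LinearMap.ker (toEnd k L M e) ≤ weightSum k M h (Set.Ici 0) := fun x hx ↦
    t.mem_weightSum_Ici_of_lie_f_lie_e_eq_zero (by rw [show ⁅e, x⁆ = 0 from hx, lie_zero])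
  have := t.finrank_ker_toEnd_e_inf_weightSum_Ici (k := k) (M := M) (m := 0) (by norm_num)
  rwa [inf_eq_left.mpr hle] at this

lemma finrank_ker_toEnd_e_sq (t : IsSl2Triple h e f) :
    finrank k (LinearMap.ker (toEnd k L M e ^ 2)) = finrank k (LinearMap.ker (toEnd k L M e)) +
      finrank k (LinearMap.ker (toEnd k L M e) ⊓ weightSum k M h (Set.Ici 1) :
        Submodule k M) := by
  have hker : LinearMap.ker (toEnd k L M e ^ 2) =
      (LinearMap.ker (toEnd k L M e)).comap (toEnd k L M e) := by
    rw [pow_two]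
    rfl
  have hle : LinearMap.ker (toEnd k L M e) ≤ LinearMap.ker (toEnd k L M e ^ 2) := by
    rw [hker]
    exact Submodule.comap_mono bot_le
  rw [← Submodule.finrank_map_add_finrank_ker_inf (toEnd k L M e), inf_eq_left.mpr hle, hker,
    Submodule.map_comap_eq, inf_comm, t.ker_inf_range_toEnd_e, add_comm]

end IsSl2Triple

/-- For an sl₂-triple `(h,e,f)` in a finite-dimensional Lie algebra over a char-0 field,
`dim ker((ad e)²) = dim 𝔤(0) + 2·dim 𝔤(1) + dim 𝔤(2) = dim 𝔤^e + dim 𝔤^e_nil`. -/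
theorem stmt_0 {k : Type*} [Field k] [CharZero k]
    {L : Type*} [LieRing L] [LieAlgebra k L] [FiniteDimensional k L]
    {h e f : L} (ht : IsSl2Triple h e f) :
    Module.finrank k (LinearMap.ker ((ad k L e) ^ 2)) =
      Module.finrank k ((ad k L h).eigenspace ((0 : ℤ) : k)) +
        2 * Module.finrank k ((ad k L h).eigenspace ((1 : ℤ) : k)) +
        Module.finrank k ((ad k L h).eigenspace ((2 : ℤ) : k)) ∧
    Module.finrank k (LinearMap.ker ((ad k L e) ^ 2)) =
      Module.finrank k (LinearMap.ker (ad k L e)) +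
        Module.finrank k ((LinearMap.ker (ad k L e) ⊓
          ⨆ i ∈ Set.Ici (1 : ℤ), (ad k L h).eigenspace ((i : ℤ) : k) : Submodule k L)) := by
  refine ⟨?_, ht.finrank_ker_toEnd_e_sq⟩
  have h₁ := ht.finrank_ker_toEnd_e_sq (k := k) (M := L)
  rw [ht.finrank_ker_toEnd_e, ht.finrank_ker_toEnd_e_inf_weightSum_Ici (by norm_num)] at h₁
  refine h₁.trans ?_
  change _ = finrank k ((LieModule.toEnd k L L h).eigenspace ((0 : ℤ) : k)) +
    2 * finrank k ((LieModule.toEnd k L L h).eigenspace ((1 : ℤ) : k)) +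
    finrank k ((LieModule.toEnd k L L h).eigenspace ((1 + 1 : ℤ) : k))
  ring
end

section
/- Let 𝔤 be a finite-dimensional Lie algebra over a field k of characteristic 0, let (h,e,f) be an sl₂-triple in 𝔤 such that 𝔤(i) = 0 for every odd integer i (e is even), and suppose that (h/2, e', f') is also an sl₂-triple in 𝔤 for some e', f' ∈ 𝔤. Then dim ker(ad e') = dim ker((ad e)²) = dim 𝔤^e + dim 𝔤^e_nil. -/
open LieAlgebra Module

section Eigenspaces

variable {k V : Type*} [Field k] [AddCommGroup V] [Module k V]

/-- In finite dimension, a sequence of vectors whose eigenvalues form a nonconstant arithmetic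
progression contains the zero vector. -/
lemma exists_eq_zero_of_apply_eq_smul [CharZero k] [FiniteDimensional k V] (T : End k V)
    (x : ℕ → V) (a b : k) (hb : b ≠ 0) (hx : ∀ n, T (x n) = (a + b * n) • x n) :
    ∃ n, x n = 0 := by
  by_contra! hne
  have hinj : Function.Injective fun n : ℕ ↦ a + b * n := fun m n hmn ↦ by simpa [hb] using hmn
  have hli := T.eigenvectors_linearIndependent' _ hinj x
    fun n ↦ ⟨End.mem_eigenspace_iff.2 (hx n), hne n⟩
  exact Set.infinite_univ (Set.finite_univ_iff.2 hli.finite)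

/-- If no index in `s` has eigenvalue `c`, then `T - c` is surjective on the sum of the eigenspaces
indexed by `s`. -/
lemma exists_mem_biSup_eigenspace_sub_smul_eq (T : End k V) {s : Set ℕ} {c : k}
    (hc : ∀ i ∈ s, (i : k) ≠ c) {w : V} (hw : w ∈ ⨆ i ∈ s, T.eigenspace (i : k)) :
    ∃ u ∈ ⨆ i ∈ s, T.eigenspace (i : k), T u - c • u = w := by
  suffices h : (⨆ i ∈ s, T.eigenspace (i : k)) ≤
      (⨆ i ∈ s, T.eigenspace (i : k)).map (T - c • LinearMap.id) by
    obtain ⟨u, hu, rfl⟩ := h hw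
    exact ⟨u, hu, rfl⟩
  refine iSup₂_le fun i hi x hx ↦ ?_
  have hxs : x ∈ ⨆ i ∈ s, T.eigenspace (i : k) :=
    Submodule.mem_iSup_of_mem i (Submodule.mem_iSup_of_mem hi hx)
  refine ⟨((i : k) - c)⁻¹ • x, Submodule.smul_mem _ _ hxs, ?_⟩
  rw [End.mem_eigenspace_iff] at hx
  have hne : (i : k) - c ≠ 0 := sub_ne_zero.2 (hc i hi)
  rw [map_smul, LinearMap.sub_apply, hx, LinearMap.smul_apply, LinearMap.id_apply, ← sub_smul,
    smul_smul, inv_mul_cancel₀ hne, one_smul]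

lemma disjoint_eigenspace_biSup_eigenspace (T : End k V) {s : Set ℕ} {c : k}
    (hc : ∀ i ∈ s, (i : k) ≠ c) :
    Disjoint (T.eigenspace c) (⨆ i ∈ s, T.eigenspace (i : k)) := by
  refine (T.eigenspaces_iSupIndep.disjoint_biSup (x := c) (y := {c}ᶜ) (by simp)).mono_right ?_
  exact iSup₂_le fun i hi ↦ le_iSup₂_of_le (i : k) (hc i hi) le_rfl

lemma biSup_Ici_eq_sup {α : Type*} [CompleteLattice α] (a : ℕ → α) (n : ℕ) :
    (⨆ i ∈ Set.Ici n, a i) = a n ⊔ ⨆ i ∈ Set.Ici (n + 1), a i := by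
  have hset : Set.Ici n = insert n (Set.Ici (n + 1)) := by
    ext i
    simp only [Set.mem_insert_iff, Set.mem_Ici]
    omega
  rw [hset, iSup_insert]

lemma finrank_ker_sq [FiniteDimensional k V] (T : End k V) :
    finrank k (LinearMap.ker (T ^ 2)) =
      finrank k (LinearMap.ker T) +
        finrank k (LinearMap.ker T ⊓ LinearMap.range T : Submodule k V) := by
  have hle : LinearMap.ker T ≤ LinearMap.ker (T ^ 2) := fun x hx ↦ by
    simp [pow_two, LinearMap.mem_ker.1 hx]
  have hrange : LinearMap.range (T.domRestrict (LinearMap.ker (T ^ 2))) =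
      LinearMap.ker T ⊓ LinearMap.range T := by
    ext x
    constructor
    · rintro ⟨⟨y, hy⟩, rfl⟩
      exact ⟨by simpa [pow_two] using hy, y, rfl⟩
    · rintro ⟨hx, y, rfl⟩
      exact ⟨⟨y, by simpa [pow_two] using hx⟩, rfl⟩
  have hker : finrank k (LinearMap.ker (T.domRestrict (LinearMap.ker (T ^ 2)))) =
      finrank k (LinearMap.ker T) := by
    rw [LinearMap.ker_domRestrict]
    exact (Submodule.comapSubtypeEquivOfLe hle).finrank_eq
  rw [← LinearMap.finrank_range_add_finrank_ker (T.domRestrict (LinearMap.ker (T ^ 2))), hrange,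
    hker, add_comm]

end Eigenspaces

namespace IsSl2Triple

open LieModule

variable {k L M : Type*} [Field k] [LieRing L] [LieAlgebra k L]
  [AddCommGroup M] [Module k M] [LieRingModule L M] [LieModule k L M]
  {h e f : L}

lemma lie_e_mem_eigenspace (t : IsSl2Triple h e f) {μ ν : k} (hν : ν = μ + 2) {m : M}
    (hm : m ∈ (toEnd k L M h).eigenspace μ) : ⁅e, m⁆ ∈ (toEnd k L M h).eigenspace ν := by
  rw [End.mem_eigenspace_iff, toEnd_apply_apply] at hm ⊢
  simpa [hν] using t.lie_h_pow_toEnd_e hm 1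

lemma lie_f_mem_eigenspace (t : IsSl2Triple h e f) {μ ν : k} (hν : ν = μ - 2) {m : M}
    (hm : m ∈ (toEnd k L M h).eigenspace μ) : ⁅f, m⁆ ∈ (toEnd k L M h).eigenspace ν := by
  rw [End.mem_eigenspace_iff, toEnd_apply_apply] at hm ⊢
  rw [leibniz_lie, t.lie_lie_smul_f k, hm, hν, lie_smul, neg_lie, smul_lie]
  module

lemma lie_e_mem_biSup_eigenspace (t : IsSl2Triple h e f) {n : ℕ} {m : M}
    (hm : m ∈ ⨆ i ∈ Set.Ici n, (toEnd k L M h).eigenspace (i : k)) :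
    ⁅e, m⁆ ∈ ⨆ i ∈ Set.Ici (n + 2), (toEnd k L M h).eigenspace (i : k) := by
  suffices hle : (⨆ i ∈ Set.Ici n, (toEnd k L M h).eigenspace (i : k)) ≤
      (⨆ i ∈ Set.Ici (n + 2), (toEnd k L M h).eigenspace (i : k)).comap (toEnd k L M e) from hle hm
  refine iSup₂_le fun i hi x hx ↦ ?_
  exact Submodule.mem_iSup_of_mem (i + 2) (Submodule.mem_iSup_of_mem (by simpa using hi)
    (t.lie_e_mem_eigenspace (by simp) hx))

lemma lie_h_pow_toEnd_f_apply (t : IsSl2Triple h e f) (n : ℕ) (m : M) :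
    ⁅h, (toEnd k L M f ^ n) m⁆ = (toEnd k L M f ^ n) (⁅h, m⁆ - (2 * n : k) • m) := by
  induction n with
  | zero => simp
  | succ n ih =>
    rw [pow_succ', End.mul_apply, toEnd_apply_apply, leibniz_lie, ih, t.lie_lie_smul_f k,
      End.mul_apply, toEnd_apply_apply]
    simp only [map_sub, map_smul, neg_lie, smul_lie, lie_sub, lie_smul]
    push_cast
    module

lemma lie_e_pow_succ_toEnd_f_apply (t : IsSl2Triple h e f) {m : M} (hm : ⁅e, m⁆ = 0) (n : ℕ) :
    ⁅e, (toEnd k L M f ^ (n + 1)) m⁆ =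
      (n + 1 : k) • (toEnd k L M f ^ n) (⁅h, m⁆ - (n : k) • m) := by
  induction n with
  | zero => simp [leibniz_lie e, t.lie_e_f, hm]
  | succ n ih =>
    rw [pow_succ', End.mul_apply, toEnd_apply_apply, leibniz_lie, ih, t.lie_e_f,
      t.lie_h_pow_toEnd_f_apply]
    simp only [map_sub, map_smul, lie_sub, lie_smul, pow_succ' _ n, End.mul_apply,
      toEnd_apply_apply]
    push_cast
    module

variable [CharZero k]

lemma ker_e_inf_biSup_eigenspace_eq_sup (t : IsSl2Triple h e f) (n : ℕ) :
    (LinearMap.ker (toEnd k L M e) ⊓ ⨆ i ∈ Set.Ici n, (toEnd k L M h).eigenspace (i : k)) =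
      (LinearMap.ker (toEnd k L M e) ⊓ (toEnd k L M h).eigenspace (n : k)) ⊔
      (LinearMap.ker (toEnd k L M e) ⊓
        ⨆ i ∈ Set.Ici (n + 1), (toEnd k L M h).eigenspace (i : k)) := by
  rw [biSup_Ici_eq_sup (fun i : ℕ ↦ (toEnd k L M h).eigenspace (i : k))]
  refine le_antisymm ?_ (sup_le (inf_le_inf_left _ le_sup_left) (inf_le_inf_left _ le_sup_right))
  rintro m ⟨hm, hm'⟩
  obtain ⟨x, hx, y, hy, rfl⟩ := Submodule.mem_sup.1 hm'
  have hxy : ⁅e, x⁆ + ⁅e, y⁆ = 0 := by simpa using hm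
  have hex : ⁅e, x⁆ = 0 := by
    refine (Submodule.disjoint_def.1 (disjoint_eigenspace_biSup_eigenspace (toEnd k L M h)
      (s := Set.Ici (n + 1 + 2)) (c := ((n + 2 : ℕ) : k)) fun i hi ↦ ?_)) _
      (t.lie_e_mem_eigenspace (by simp) hx) ?_
    · rw [Set.mem_Ici] at hi
      exact_mod_cast (by omega : i ≠ n + 2)
    · rw [eq_neg_of_add_eq_zero_left hxy]
      exact neg_mem (t.lie_e_mem_biSup_eigenspace hy)
  have hey : ⁅e, y⁆ = 0 := by simpa [hex] using hxy
  exact Submodule.mem_sup.2 ⟨x, ⟨hex, hx⟩, y, ⟨hey, hy⟩, rfl⟩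

variable [FiniteDimensional k M]

variable (k M) in
lemma exists_toEnd_f_pow_eq_zero (t : IsSl2Triple h e f) : ∃ n, toEnd k L M f ^ n = 0 := by
  refine exists_eq_zero_of_apply_eq_smul
    (LinearMap.mulLeft k (toEnd k L M h) - LinearMap.mulRight k (toEnd k L M h)) _ 0 (-2)
    (by simp) ?_
  intro n
  have hf : toEnd k L M h * toEnd k L M f =
      -((2 : k) • toEnd k L M f) + toEnd k L M f * toEnd k L M h := by
    ext x
    simp [leibniz_lie h, t.lie_lie_smul_f k]
  induction n with
  | zero => simp
  | succ n ih =>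
    rw [LinearMap.sub_apply, LinearMap.mulLeft_apply, LinearMap.mulRight_apply,
      sub_eq_iff_eq_add] at ih ⊢
    rw [pow_succ, ← mul_assoc, ih, add_mul, mul_assoc, hf]
    simp only [mul_add, mul_neg, mul_smul_comm, smul_mul_assoc, mul_assoc]
    push_cast
    module

/-- Vectors killed by `e` are sums of eigenvectors of `h` whose eigenvalues are natural numbers. -/
lemma mem_biSup_eigenspace_of_lie_e_eq_zero (t : IsSl2Triple h e f) {m : M} (hm : ⁅e, m⁆ = 0) :
    m ∈ ⨆ i ∈ Set.Ici 0, (toEnd k L M h).eigenspace ((i : ℕ) : k) := by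
  obtain ⟨N, hN⟩ := t.exists_toEnd_f_pow_eq_zero k M
  suffices key : ∀ n : ℕ, ∀ m : M, ⁅e, m⁆ = 0 → (toEnd k L M f ^ n) m = 0 →
      m ∈ ⨆ i ∈ Set.Iio n, (toEnd k L M h).eigenspace ((i : ℕ) : k) from
    (biSup_mono fun i _ ↦ Nat.zero_le i :
      (⨆ i ∈ Set.Iio N, (toEnd k L M h).eigenspace ((i : ℕ) : k)) ≤ _) (key N m hm (by simp [hN]))
  intro n
  induction n with
  | zero => intro m _ hm; simpa using hm
  | succ n ih =>
    intro m hm hfm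
    have hle : (⨆ i ∈ Set.Iio n, (toEnd k L M h).eigenspace ((i : ℕ) : k)) ≤
        ⨆ i ∈ Set.Iio (n + 1), (toEnd k L M h).eigenspace ((i : ℕ) : k) :=
      biSup_mono fun i (hi : i < n) ↦ Nat.lt_succ_of_lt hi
    have hker : ⁅e, ⁅h, m⁆ - (n : k) • m⁆ = 0 := by
      rw [lie_sub, lie_smul, hm, leibniz_lie, hm, ← lie_skew, t.lie_h_e_smul k]
      simp [hm]
    have hpow : (toEnd k L M f ^ n) (⁅h, m⁆ - (n : k) • m) = 0 := by
      have := t.lie_e_pow_succ_toEnd_f_apply (k := k) hm n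
      rw [hfm, lie_zero, eq_comm, smul_eq_zero] at this
      exact this.resolve_left (Nat.cast_add_one_ne_zero n)
    obtain ⟨u, hu, hum⟩ := exists_mem_biSup_eigenspace_sub_smul_eq (toEnd k L M h) (c := (n : k))
      (fun i (hi : i < n) ↦ by exact_mod_cast hi.ne) (ih _ hker hpow)
    have hmu : m - u ∈ (toEnd k L M h).eigenspace (n : k) := by
      rw [End.mem_eigenspace_iff, map_sub, smul_sub, sub_eq_sub_iff_sub_eq_sub, hum]
      rfl
    rw [← sub_add_cancel m u]
    exact add_mem (Submodule.mem_iSup_of_mem n (Submodule.mem_iSup_of_mem n.lt_succ_self hmu))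
      (hle hu)

/-- `e ∘ f` is injective on the eigenspaces of `h` with positive eigenvalue. -/
lemma eq_zero_of_lie_e_lie_f_eq_zero (t : IsSl2Triple h e f) {n : ℕ} (hn : n ≠ 0) {m : M}
    (hm : m ∈ (toEnd k L M h).eigenspace (n : k)) (hef : ⁅e, ⁅f, m⁆⁆ = 0) : m = 0 := by
  rw [End.mem_eigenspace_iff, toEnd_apply_apply] at hm
  have hfe (j : ℕ) : ⁅f, (toEnd k L M e ^ (j + 1)) m⁆ =
      (-((j + 1) * (n + j)) : k) • (toEnd k L M e ^ j) m := by
    have hswap (x : M) : ⁅f, ⁅e, x⁆⁆ = ⁅e, ⁅f, x⁆⁆ - ⁅h, x⁆ := by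
      rw [leibniz_lie e, t.lie_e_f]; abel
    induction j with
    | zero => simp [hswap, hef, hm]
    | succ j ih =>
      rw [pow_succ', End.mul_apply, toEnd_apply_apply, hswap, ih, lie_smul,
        t.lie_h_pow_toEnd_e hm, lie_e_pow_toEnd_e]
      push_cast
      module
  by_contra hne
  have hpow (j : ℕ) : (toEnd k L M e ^ j) m ≠ 0 := by
    induction j with
    | zero => simpa using hne
    | succ j ih =>
      intro h0
      have := hfe j
      rw [h0, lie_zero, eq_comm, smul_eq_zero, or_iff_left ih, neg_eq_zero, mul_eq_zero] at this
      norm_cast at this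
      simp [hn] at this
  obtain ⟨j, hj⟩ := exists_eq_zero_of_apply_eq_smul (toEnd k L M h)
    (fun j ↦ (toEnd k L M e ^ j) m) (n : k) 2 (by simp) fun j ↦ t.lie_h_pow_toEnd_e hm j
  exact hpow j hj

/-- `e` maps onto the eigenspaces of `h` with positive eigenvalue. -/
lemma exists_mem_eigenspace_lie_e_eq (t : IsSl2Triple h e f) {n : ℕ} (hn : n ≠ 0) {m : M}
    (hm : m ∈ (toEnd k L M h).eigenspace (n : k)) :
    ∃ u ∈ (toEnd k L M h).eigenspace (n - 2 : k), ⁅e, u⁆ = m := by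
  have hmaps : ∀ x ∈ (toEnd k L M h).eigenspace (n : k),
      (toEnd k L M e * toEnd k L M f) x ∈ (toEnd k L M h).eigenspace (n : k) := fun x hx ↦
    t.lie_e_mem_eigenspace (by ring) (t.lie_f_mem_eigenspace rfl hx)
  have hinj : Function.Injective ((toEnd k L M e * toEnd k L M f).restrict hmaps) := by
    rw [injective_iff_map_eq_zero]
    rintro ⟨x, hx⟩ h0
    exact Subtype.ext (t.eq_zero_of_lie_e_lie_f_eq_zero hn hx (congrArg Subtype.val h0))
  obtain ⟨⟨x, hx⟩, hxm⟩ := LinearMap.injective_iff_surjective.1 hinj ⟨m, hm⟩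
  exact ⟨⁅f, x⁆, t.lie_f_mem_eigenspace rfl hx, congrArg Subtype.val hxm⟩

variable (k M) in
lemma finrank_ker_e_inf_eigenspace_add (t : IsSl2Triple h e f) (n : ℕ) :
    finrank k (LinearMap.ker (toEnd k L M e) ⊓ (toEnd k L M h).eigenspace (n : k) : Submodule k M) +
      finrank k ((toEnd k L M h).eigenspace ((n + 2 : ℕ) : k)) =
      finrank k ((toEnd k L M h).eigenspace (n : k)) := by
  set T := (toEnd k L M e).domRestrict ((toEnd k L M h).eigenspace (n : k)) with hT
  have hrange : LinearMap.range T = (toEnd k L M h).eigenspace ((n + 2 : ℕ) : k) := by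
    ext x
    constructor
    · rintro ⟨⟨y, hy⟩, rfl⟩
      exact t.lie_e_mem_eigenspace (by simp) hy
    · intro hx
      obtain ⟨u, hu, rfl⟩ := t.exists_mem_eigenspace_lie_e_eq (by simp) hx
      exact ⟨⟨u, by simpa using hu⟩, rfl⟩
  have hker : finrank k (LinearMap.ker T) = finrank k (LinearMap.ker (toEnd k L M e) ⊓
      (toEnd k L M h).eigenspace (n : k) : Submodule k M) := by
    rw [hT, LinearMap.ker_domRestrict, ← Submodule.finrank_map_subtype_eq,
      Submodule.map_comap_subtype, inf_comm]
  rw [← hker, ← hrange, add_comm, LinearMap.finrank_range_add_finrank_ker]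

variable (k M) in
lemma finrank_ker_e_inf_biSup_eigenspace (t : IsSl2Triple h e f) (n : ℕ) :
    finrank k (LinearMap.ker (toEnd k L M e) ⊓
        ⨆ i ∈ Set.Ici n, (toEnd k L M h).eigenspace (i : k) : Submodule k M) =
      finrank k ((toEnd k L M h).eigenspace (n : k)) +
      finrank k ((toEnd k L M h).eigenspace ((n + 1 : ℕ) : k)) := by
  obtain ⟨N, hN⟩ : ∃ N : ℕ, ∀ i ≥ N, (toEnd k L M h).eigenspace (i : k) = ⊥ := by
    have hfin : {i : ℕ | (toEnd k L M h).HasEigenvalue (i : k)}.Finite :=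
      (toEnd k L M h).finite_hasEigenvalue.preimage Nat.cast_injective.injOn
    obtain ⟨N, hN⟩ := hfin.bddAbove
    refine ⟨N + 1, fun i hi ↦ by_contra fun hne ↦ ?_⟩
    have := hN (show i ∈ {i : ℕ | (toEnd k L M h).HasEigenvalue (i : k)} from hne)
    omega
  have htop {n : ℕ} (hn : N ≤ n) : finrank k (LinearMap.ker (toEnd k L M e) ⊓
        ⨆ i ∈ Set.Ici n, (toEnd k L M h).eigenspace (i : k) : Submodule k M) =
      finrank k ((toEnd k L M h).eigenspace (n : k)) +
      finrank k ((toEnd k L M h).eigenspace ((n + 1 : ℕ) : k)) := by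
    have : (⨆ i ∈ Set.Ici n, (toEnd k L M h).eigenspace (i : k)) = ⊥ := by
      rw [iSup₂_eq_bot]
      exact fun i hi ↦ hN i (hn.trans hi)
    rw [this, hN n hn, hN (n + 1) (by omega)]
    simp
  induction hd : N - n generalizing n with
  | zero => exact htop (by omega)
  | succ d ih =>
    have hdisj : Disjoint (LinearMap.ker (toEnd k L M e) ⊓ (toEnd k L M h).eigenspace (n : k))
        (LinearMap.ker (toEnd k L M e) ⊓
          ⨆ i ∈ Set.Ici (n + 1), (toEnd k L M h).eigenspace (i : k)) := by
      refine (disjoint_eigenspace_biSup_eigenspace (toEnd k L M h) fun i hi ↦ ?_).mono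
        inf_le_right inf_le_right
      rw [Set.mem_Ici] at hi
      exact_mod_cast (by omega : i ≠ n)
    have hadd := Submodule.finrank_sup_add_finrank_inf_eq
      (LinearMap.ker (toEnd k L M e) ⊓ (toEnd k L M h).eigenspace (n : k))
      (LinearMap.ker (toEnd k L M e) ⊓
        ⨆ i ∈ Set.Ici (n + 1), (toEnd k L M h).eigenspace (i : k))
    rw [← t.ker_e_inf_biSup_eigenspace_eq_sup, hdisj.eq_bot, finrank_bot, ih (n + 1) (by omega)]
      at hadd
    have := t.finrank_ker_e_inf_eigenspace_add k M n
    rw [add_assoc n 1 1, one_add_one_eq_two] at hadd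
    omega

lemma eq_zero_of_mem_eigenspace_zero_of_lie_e_eq (t : IsSl2Triple h e f) {m u : M}
    (hm0 : m ∈ (toEnd k L M h).eigenspace (0 : k)) (hem : ⁅e, m⁆ = 0) (hu : ⁅e, u⁆ = m) :
    m = 0 := by
  have hm : ⁅h, m⁆ = 0 := by simpa using hm0
  have hfm : ⁅f, m⁆ = 0 := by
    by_contra hne
    have P : t.HasPrimitiveVectorWith m (0 : k) :=
      ⟨fun h0 ↦ hne (by simp [h0]), by simpa using hm, hem⟩
    exact hne (by simpa using P.pow_toEnd_f_eq_zero_of_eq_nat (n := 0) (by simp))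
  have hker : ⁅e, ⁅h, u⁆ - (-2 : k) • u⁆ = 0 := by
    rw [lie_sub, lie_smul, leibniz_lie, hu, hm, ← lie_skew, t.lie_h_e_smul k]
    simp [hu]
  obtain ⟨v, hv, hvu⟩ := exists_mem_biSup_eigenspace_sub_smul_eq (toEnd k L M h) (c := (-2 : k))
    (fun i _ hi ↦ by
      have : ((i + 2 : ℕ) : k) = 0 := by rw [Nat.cast_add, hi]; norm_num
      simp [-Nat.cast_add] at this)
    (t.mem_biSup_eigenspace_of_lie_e_eq_zero (k := k) hker)
  have huv : u - v ∈ (toEnd k L M h).eigenspace (-2 : k) := by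
    rw [End.mem_eigenspace_iff, map_sub, smul_sub, sub_eq_sub_iff_sub_eq_sub, hvu]
    rfl
  have hev : ⁅e, v⁆ = 0 := by
    refine (Submodule.disjoint_def.1 (disjoint_eigenspace_biSup_eigenspace (toEnd k L M h)
      (s := Set.Ici (0 + 2)) (c := (0 : k)) fun i hi ↦ ?_)) _ ?_ (t.lie_e_mem_biSup_eigenspace hv)
    · rw [Set.mem_Ici] at hi
      exact_mod_cast (by omega : i ≠ 0)
    · have := sub_mem hm0 (t.lie_e_mem_eigenspace (ν := (0 : k)) (by ring) huv)
      simpa [hu] using this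
  have huv0 : u - v = 0 := by
    refine t.symm.eq_zero_of_lie_e_lie_f_eq_zero (k := k) (n := 2) (by simp) ?_ ?_
    · rw [End.mem_eigenspace_iff] at huv ⊢
      rw [map_neg, LinearMap.neg_apply, huv]
      simp
    · rw [lie_sub, hu, hev, sub_zero, hfm]
  rw [← hu, sub_eq_zero.1 huv0, hev]

variable (k M) in
/-- The part of the image of `e` killed by `e` has only positive eigenvalues of `h`. -/
lemma ker_e_inf_range_e (t : IsSl2Triple h e f) :
    LinearMap.ker (toEnd k L M e) ⊓ LinearMap.range (toEnd k L M e) =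
      LinearMap.ker (toEnd k L M e) ⊓
        ⨆ i ∈ Set.Ici 1, (toEnd k L M h).eigenspace ((i : ℕ) : k) := by
  have hrange : (⨆ i ∈ Set.Ici 1, (toEnd k L M h).eigenspace ((i : ℕ) : k)) ≤
      LinearMap.range (toEnd k L M e) := by
    refine iSup₂_le fun i hi x hx ↦ ?_
    rw [Set.mem_Ici] at hi
    obtain ⟨u, -, hu⟩ := t.exists_mem_eigenspace_lie_e_eq (by omega) hx
    exact ⟨u, hu⟩
  refine le_antisymm ?_ (inf_le_inf_left _ hrange)
  rintro m ⟨hm, hm'⟩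
  have hmem : m ∈ LinearMap.ker (toEnd k L M e) ⊓
      ⨆ i ∈ Set.Ici 0, (toEnd k L M h).eigenspace ((i : ℕ) : k) :=
    ⟨hm, t.mem_biSup_eigenspace_of_lie_e_eq_zero hm⟩
  rw [t.ker_e_inf_biSup_eigenspace_eq_sup] at hmem
  obtain ⟨x, ⟨hex, hx⟩, y, hy, rfl⟩ := Submodule.mem_sup.1 hmem
  obtain ⟨u, hu⟩ := (Submodule.add_mem_iff_left _ (hrange hy.2)).1 hm'
  have hx0 : x = 0 := t.eq_zero_of_mem_eigenspace_zero_of_lie_e_eq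
    (by rwa [Nat.cast_zero] at hx) hex hu
  simpa [hx0] using hy

variable (k M) in
lemma finrank_ker_e (t : IsSl2Triple h e f) :
    finrank k (LinearMap.ker (toEnd k L M e)) =
      finrank k ((toEnd k L M h).eigenspace (0 : k)) +
      finrank k ((toEnd k L M h).eigenspace (1 : k)) := by
  have := t.finrank_ker_e_inf_biSup_eigenspace k M 0
  rw [inf_eq_left.2 fun m hm ↦ t.mem_biSup_eigenspace_of_lie_e_eq_zero hm] at this
  rwa [zero_add, Nat.cast_zero, Nat.cast_one] at this

end IsSl2Triple

/-- If `(h,e,f)` is an sl₂-triple with `e` even (all odd eigenspaces of `ad h` vanish) and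
`(h/2, e', f')` is also an sl₂-triple, then
`dim ker(ad e') = dim ker((ad e)²) = dim 𝔤^e + dim 𝔤^e_nil`. -/
theorem stmt_1 {k : Type*} [Field k] [CharZero k]
    {L : Type*} [LieRing L] [LieAlgebra k L] [FiniteDimensional k L]
    {h e f e' f' : L} (ht : IsSl2Triple h e f)
    (heven : ∀ i : ℤ, Odd i → (ad k L h).eigenspace ((i : ℤ) : k) = ⊥)
    (ht' : IsSl2Triple ((2⁻¹ : k) • h) e' f') :
    Module.finrank k (LinearMap.ker (ad k L e')) =
      Module.finrank k (LinearMap.ker ((ad k L e) ^ 2)) ∧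
    Module.finrank k (LinearMap.ker ((ad k L e) ^ 2)) =
      Module.finrank k (LinearMap.ker (ad k L e)) +
        Module.finrank k ((LinearMap.ker (ad k L e) ⊓
          ⨆ i ∈ Set.Ici (1 : ℤ), (ad k L h).eigenspace ((i : ℤ) : k) : Submodule k L)) := by
  have hnil : (⨆ i ∈ Set.Ici (1 : ℤ), (ad k L h).eigenspace ((i : ℤ) : k)) =
      ⨆ i ∈ Set.Ici 1, (ad k L h).eigenspace ((i : ℕ) : k) := by
    refine le_antisymm (iSup₂_le fun i hi ↦ ?_) (iSup₂_le fun i hi ↦ ?_) <;>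
      rw [Set.mem_Ici] at hi
    · lift i to ℕ using by omega
      exact le_iSup₂_of_le i (by simpa using hi) (by simp)
    · exact le_iSup₂_of_le (i : ℤ) (by simpa using hi) (by simp)
  have hodd : finrank k ((ad k L h).eigenspace (1 : k)) = 0 := by
    have := heven 1 odd_one
    rw [Int.cast_one] at this
    rw [this, finrank_bot]
  have hhalf (μ : k) : (ad k L ((2⁻¹ : k) • h)).eigenspace μ = (ad k L h).eigenspace (2 * μ) := by
    ext x
    rw [End.mem_eigenspace_iff, End.mem_eigenspace_iff, map_smul, LinearMap.smul_apply,
      inv_smul_eq_iff₀ two_ne_zero, smul_smul]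
  have he := ht.finrank_ker_e k L
  have he' := ht'.finrank_ker_e k L
  have hpos := ht.finrank_ker_e_inf_biSup_eigenspace k L 1
  have hsq := finrank_ker_sq (ad k L e)
  rw [show LinearMap.ker (ad k L e) ⊓ LinearMap.range (ad k L e) = LinearMap.ker (ad k L e) ⊓
    ⨆ i ∈ Set.Ici 1, (ad k L h).eigenspace ((i : ℕ) : k) from ht.ker_e_inf_range_e k L] at hsq
  change finrank k (LinearMap.ker (ad k L e)) = finrank k ((ad k L h).eigenspace (0 : k)) +
    finrank k ((ad k L h).eigenspace (1 : k)) at he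
  change finrank k (LinearMap.ker (ad k L e')) =
    finrank k ((ad k L ((2⁻¹ : k) • h)).eigenspace (0 : k)) +
    finrank k ((ad k L ((2⁻¹ : k) • h)).eigenspace (1 : k)) at he'
  change finrank k (LinearMap.ker (ad k L e) ⊓
      ⨆ i ∈ Set.Ici 1, (ad k L h).eigenspace ((i : ℕ) : k) : Submodule k L) =
    finrank k ((ad k L h).eigenspace ((1 : ℕ) : k)) +
    finrank k ((ad k L h).eigenspace ((2 : ℕ) : k)) at hpos
  rw [hhalf, hhalf, mul_zero, mul_one] at he'
  rw [Nat.cast_one, Nat.cast_ofNat] at hpos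
  rw [hnil]
  omega
end

section
/- Let 𝔤 be a finite-dimensional Lie algebra over a field k of characteristic 0 and let (h,e,f) and (h/2, e', f') both be sl₂-triples in 𝔤. Then for every integer i ≥ 0: dim(𝔤^e ∩ 𝔤(2i)) + dim(𝔤^e ∩ 𝔤(2i+2)) = dim(𝔤^{e'} ∩ 𝔤(2i)). (Here 𝔤^{e'} ∩ 𝔤(2i) is the degree-i component of the centralizer of e' with respect to its characteristic h/2.) -/
open LieAlgebra Module

section Sl2Representation

variable {k L M : Type*} [Field k] [LieRing L] [LieAlgebra k L]
  [AddCommGroup M] [Module k M] [LieRingModule L M] [LieModule k L M]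
  {h e f : L}

open LieModule

/-- The commutation relation `[eⁿ⁺¹, f] = (n + 1) eⁿ (h + n)` evaluated on a weight vector. -/
lemma IsSl2Triple.pow_succ_toEnd_e_lie_f (t : IsSl2Triple h e f) {μ : k} {v : M}
    (hv : ⁅h, v⁆ = μ • v) (n : ℕ) :
    (toEnd k L M e ^ (n + 1)) ⁅f, v⁆ =
      ⁅f, (toEnd k L M e ^ (n + 1)) v⁆ + ((n + 1) * (μ + n)) • (toEnd k L M e ^ n) v := by
  induction n with
  | zero => simp [leibniz_lie e, t.lie_e_f, hv, add_comm]
  | succ n ih =>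
    rw [pow_succ' _ (n + 1), Module.End.mul_apply, ih, Module.End.mul_apply, map_add, map_smul]
    simp only [toEnd_apply_apply]
    rw [leibniz_lie e, t.lie_e_f, t.lie_h_pow_toEnd_e hv, IsSl2Triple.lie_e_pow_toEnd_e n,
      add_comm _ ⁅f, _⁆, add_assoc, ← add_smul]
    congr 2
    push_cast
    ring

/-- In a finite-dimensional representation, `e` acts nilpotently on every weight vector. -/
lemma IsSl2Triple.exists_pow_toEnd_e_eq_zero [CharZero k] [FiniteDimensional k M]
    (t : IsSl2Triple h e f) {μ : k} {v : M} (hv : ⁅h, v⁆ = μ • v) :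
    ∃ n : ℕ, (toEnd k L M e ^ n) v = 0 := by
  by_contra! contra
  have hinj : Function.Injective fun n : ℕ ↦ μ + 2 * (n : k) := fun a b hab ↦ by
    simpa using hab
  have hli := Module.End.eigenvectors_linearIndependent' (toEnd k L M h) _ hinj
    (fun n : ℕ ↦ (toEnd k L M e ^ n) v) fun n ↦
      ⟨by simpa [Module.End.mem_eigenspace_iff] using t.lie_h_pow_toEnd_e hv n, contra n⟩
  exact not_finite_iff_infinite.mpr (inferInstanceAs (Infinite ℕ)) hli.finite

/-- A vector of weight `m` killed by a power of `e` is in the image under `e` of the weight space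
`m - 2`, provided that `m` is not a nonpositive integer. -/
lemma IsSl2Triple.exists_lie_e_eq_of_pow_eq_zero [CharZero k] (t : IsSl2Triple h e f) {m : k}
    (hm : ∀ n : ℕ, m + n ≠ 0) (n : ℕ) {v : M} (hv : ⁅h, v⁆ = m • v)
    (hn : (toEnd k L M e ^ n) v = 0) :
    ∃ u : M, ⁅h, u⁆ = (m - 2) • u ∧ ⁅e, u⁆ = v := by
  induction n generalizing v with
  | zero => exact ⟨0, by simp, by simpa using hn.symm⟩
  | succ n ih =>
    set c : k := (n + 1) * (m + n)
    have hc0 : c ≠ 0 := mul_ne_zero n.cast_add_one_ne_zero (hm n)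
    have hfv : ⁅h, ⁅f, v⁆⁆ = (m - 2) • ⁅f, v⁆ := by
      rw [leibniz_lie h, t.lie_lie_smul_f k, hv, lie_smul, ← neg_smul, smul_lie, ← add_smul]
      congr 1
      ring
    have hefv : ⁅h, ⁅e, ⁅f, v⁆⁆⁆ = m • ⁅e, ⁅f, v⁆⁆ := by
      rw [leibniz_lie h, t.lie_h_e_smul k, hfv, lie_smul, smul_lie, ← add_smul]
      congr 1
      ring
    obtain ⟨u, hu, heu⟩ := ih (v := ⁅e, ⁅f, v⁆⁆ - c • v)
      (by rw [lie_sub, lie_smul, hefv, hv, smul_sub, smul_comm])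
      (by
        have key := t.pow_succ_toEnd_e_lie_f (k := k) hv n
        rw [hn, lie_zero, zero_add, pow_succ, Module.End.mul_apply, toEnd_apply_apply] at key
        rw [map_sub, map_smul, key, sub_self])
    refine ⟨c⁻¹ • (⁅f, v⁆ - u), ?_, ?_⟩
    · rw [lie_smul, lie_sub, hfv, hu, ← smul_sub, smul_comm]
    · rw [lie_smul, lie_sub, heu, sub_sub_cancel, inv_smul_smul₀ hc0]

lemma IsSl2Triple.map_toEnd_e_eigenspace [CharZero k] [FiniteDimensional k M]
    (t : IsSl2Triple h e f) {μ : k} (hμ : ∀ n : ℕ, μ + 2 + n ≠ 0) :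
    ((toEnd k L M h).eigenspace μ).map (toEnd k L M e) = (toEnd k L M h).eigenspace (μ + 2) := by
  ext v
  simp only [Submodule.mem_map, Module.End.mem_eigenspace_iff, toEnd_apply_apply]
  constructor
  · rintro ⟨u, hu, rfl⟩
    rw [leibniz_lie h, t.lie_h_e_smul k, hu, lie_smul, smul_lie, ← add_smul, add_comm]
  · intro hv
    obtain ⟨n, hn⟩ := t.exists_pow_toEnd_e_eq_zero hv
    simpa using t.exists_lie_e_eq_of_pow_eq_zero hμ n hv hn

end Sl2Representation

lemma LinearMap.finrank_ker_inf_add_finrank_map {k V W : Type*} [Field k] [AddCommGroup V]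
    [Module k V] [FiniteDimensional k V] [AddCommGroup W] [Module k W] (T : V →ₗ[k] W)
    (p : Submodule k V) :
    finrank k (LinearMap.ker T ⊓ p : Submodule k V) + finrank k (p.map T) = finrank k p := by
  rw [← (T.domRestrict p).finrank_range_add_finrank_ker, LinearMap.range_domRestrict,
    LinearMap.ker_domRestrict, add_comm, inf_comm, ← Submodule.map_comap_subtype,
    Submodule.finrank_map_subtype_eq]

/-- In a finite-dimensional representation of an `sl₂`-triple, the dimension of the space of
primitive vectors of weight `μ` is the difference of the dimensions of two weight spaces. -/
lemma IsSl2Triple.finrank_ker_inf_eigenspace {k L M : Type*} [Field k] [CharZero k] [LieRing L]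
    [LieAlgebra k L] [AddCommGroup M] [Module k M] [LieRingModule L M] [LieModule k L M]
    [FiniteDimensional k M] {h e f : L} (t : IsSl2Triple h e f) {μ : k}
    (hμ : ∀ n : ℕ, μ + 2 + n ≠ 0) :
    finrank k (LinearMap.ker (LieModule.toEnd k L M e) ⊓
        (LieModule.toEnd k L M h).eigenspace μ : Submodule k M) +
      finrank k ((LieModule.toEnd k L M h).eigenspace (μ + 2)) =
    finrank k ((LieModule.toEnd k L M h).eigenspace μ) := by
  rw [← t.map_toEnd_e_eigenspace hμ, LinearMap.finrank_ker_inf_add_finrank_map]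

/-- If `(h,e,f)` and `(h/2,e',f')` are both sl₂-triples in a finite-dimensional char-0
Lie algebra, then for all `i ≥ 0`:
`dim(𝔤^e ∩ 𝔤(2i)) + dim(𝔤^e ∩ 𝔤(2i+2)) = dim(𝔤^{e'} ∩ 𝔤(2i))`. -/
theorem stmt_3 {k : Type*} [Field k] [CharZero k]
    {L : Type*} [LieRing L] [LieAlgebra k L] [FiniteDimensional k L]
    {h e f e' f' : L} (ht : IsSl2Triple h e f)
    (ht' : IsSl2Triple ((2⁻¹ : k) • h) e' f') :
    ∀ i : ℤ, 0 ≤ i →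
      Module.finrank k ((LinearMap.ker (ad k L e) ⊓
          (ad k L h).eigenspace (((2 * i : ℤ) : k)) : Submodule k L)) +
        Module.finrank k ((LinearMap.ker (ad k L e) ⊓
          (ad k L h).eigenspace (((2 * i + 2 : ℤ) : k)) : Submodule k L)) =
      Module.finrank k ((LinearMap.ker (ad k L e') ⊓
          (ad k L h).eigenspace (((2 * i : ℤ) : k)) : Submodule k L)) := by
  intro i hi
  have hpos (j : ℤ) (hj : 0 ≤ j) (n : ℕ) : (j : k) + 2 + n ≠ 0 := by
    have : j + 2 + n ≠ 0 := by omega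
    exact_mod_cast this
  have hhalf (j : ℤ) : (ad k L ((2⁻¹ : k) • h)).eigenspace (j : k) =
      (ad k L h).eigenspace ((2 * j : ℤ) : k) := by
    ext v
    simp only [Module.End.mem_eigenspace_iff, ad_apply, smul_lie]
    rw [inv_smul_eq_iff₀ two_ne_zero, smul_smul]
    push_cast
    rfl
  have h₀ := ht.finrank_ker_inf_eigenspace (M := L) (hpos (2 * i) (by omega))
  have h₁ := ht.finrank_ker_inf_eigenspace (M := L) (hpos (2 * i + 2) (by omega))
  have h₂ := ht'.finrank_ker_inf_eigenspace (M := L) (hpos i hi)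
  have cast_add_two (j : ℤ) : (j : k) + 2 = ((j + 2 : ℤ) : k) := by push_cast; rfl
  rw [cast_add_two] at h₀ h₁ h₂
  change finrank k (LinearMap.ker (ad k L e') ⊓
      (ad k L ((2⁻¹ : k) • h)).eigenspace (i : k) : Submodule k L) +
    finrank k ((ad k L ((2⁻¹ : k) • h)).eigenspace ((i + 2 : ℤ) : k)) =
    finrank k ((ad k L ((2⁻¹ : k) • h)).eigenspace (i : k)) at h₂
  rw [hhalf, hhalf, show 2 * (i + 2) = 2 * i + 2 + 2 by ring] at h₂
  unfold ad at h₂ ⊢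
  omega
end

section
/- Let 𝔤 be a finite-dimensional Lie algebra over a field of characteristic 0 whose Killing form κ is nondegenerate, let (h,e,f) be an sl₂-triple in 𝔤, and let x ∈ 𝔤 satisfy ⁅h,x⁆ = 4x. Then h lies in the image of ad x (i.e., there exists z ∈ 𝔤 with ⁅x,z⁆ = h) if and only if κ(h,y) = 0 for every y ∈ 𝔤 with ⁅x,y⁆ = 0 and ⁅h,y⁆ = 0. -/
open LieAlgebra Module

namespace IsSl2Triple

open Polynomial

section Coefficients

variable (k : Type*) [Field k]

/-- The polynomial `∏ i < n, (X - (2i+1)²)`. -/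
noncomputable def casimirPoly (n : ℕ) : k[X] :=
  ∏ i ∈ Finset.range n, (X - C ((2 * i + 1 : k) ^ 2))

/-- The polynomial `∑ i < n, (2i+1) ∏ j ≠ i, (X - (2j+1)²)`, defined recursively. -/
noncomputable def casimirPolyDeriv : ℕ → k[X]
  | 0 => 0
  | n + 1 => casimirPolyDeriv n * (X - C ((2 * n + 1 : k) ^ 2)) +
      C (2 * n + 1 : k) * casimirPoly k n

lemma casimirPoly_succ (n : ℕ) :
    casimirPoly k (n + 1) = casimirPoly k n * (X - C ((2 * n + 1 : k) ^ 2)) :=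
  Finset.prod_range_succ _ n

variable [CharZero k]

lemma isCoprime_casimirPoly_X_sub_C (n : ℕ) :
    IsCoprime (casimirPoly k n) (X - C ((2 * n + 1 : k) ^ 2)) := by
  refine IsCoprime.prod_left fun i hi ↦ isCoprime_X_sub_C_of_isUnit_sub ?_
  rw [isUnit_iff_ne_zero, sub_ne_zero]
  have hi' : i < n := Finset.mem_range.mp hi
  have : (2 * i + 1) ^ 2 ≠ (2 * n + 1) ^ 2 := by
    intro h
    have := Nat.pow_left_injective (n := 2) (by norm_num) h
    omega
  exact_mod_cast this

lemma isCoprime_casimirPoly_casimirPolyDeriv (n : ℕ) :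
    IsCoprime (casimirPoly k n) (casimirPolyDeriv k n) := by
  induction n with
  | zero => simp [casimirPoly, isCoprime_one_left]
  | succ n ih =>
    have hn := isCoprime_casimirPoly_X_sub_C k n
    have ha : IsUnit (C (2 * n + 1 : k)) := by
      rw [isUnit_C, isUnit_iff_ne_zero]
      exact_mod_cast (2 * n).succ_ne_zero
    rw [casimirPoly_succ, casimirPolyDeriv]
    refine IsCoprime.mul_left ?_ ?_
    · exact IsCoprime.add_mul_right_right (ih.mul_right hn) _
    · rw [add_comm (casimirPolyDeriv k n * _)]
      refine IsCoprime.add_mul_right_right ?_ _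
      exact (isCoprime_mul_unit_left_right ha _ _).mpr hn.symm

end Coefficients

variable {k : Type*} [Field k] {L M : Type*} [LieRing L] [LieAlgebra k L]
  [AddCommGroup M] [Module k M] [LieRingModule L M] [LieModule k L M] {h e f : L}

variable (k M) in
/-- The operator `4fe + (h+1)²`, a shifted multiple of the Casimir element. -/
def shiftedCasimir (h e f : L) : End k M :=
  4 • (LieModule.toEnd k L M f * LieModule.toEnd k L M e) + (LieModule.toEnd k L M h + 1) ^ 2

lemma shiftedCasimir_apply (h e f : L) (m : M) :
    shiftedCasimir k M h e f m = (4 : k) • ⁅f, ⁅e, m⁆⁆ + ⁅h, ⁅h, m⁆⁆ + (2 : k) • ⁅h, m⁆ + m := by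
  simp [shiftedCasimir, pow_two, ← Nat.cast_smul_eq_nsmul k, two_smul]
  abel

lemma shiftedCasimir_symm (ht : IsSl2Triple h e f) :
    shiftedCasimir k M (-h) f e = shiftedCasimir k M h e f := by
  ext m
  have : ⁅e, ⁅f, m⁆⁆ = ⁅h, m⁆ + ⁅f, ⁅e, m⁆⁆ := by rw [leibniz_lie, ht.lie_e_f]
  rw [shiftedCasimir_apply, shiftedCasimir_apply, this]
  simp only [neg_lie, lie_neg, neg_neg]
  module

lemma lie_h_pow_toEnd_e_apply (ht : IsSl2Triple h e f) (n : ℕ) (m : M) :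
    ⁅h, (LieModule.toEnd k L M e ^ n) m⁆ =
      (LieModule.toEnd k L M e ^ n) (⁅h, m⁆ + (2 * n : k) • m) := by
  induction n generalizing m with
  | zero => simp
  | succ n ih =>
    have : ⁅h, ⁅e, m⁆⁆ = ⁅e, ⁅h, m⁆⁆ + (2 : k) • ⁅e, m⁆ := by
      rw [leibniz_lie, ht.lie_h_e_smul k, smul_lie, add_comm]
    simp only [pow_succ, Module.End.mul_apply, LieModule.toEnd_apply_apply, ih, this]
    congr 1
    simp only [lie_add, lie_smul]
    push_cast
    module

lemma shiftedCasimir_lie_h (ht : IsSl2Triple h e f) (m : M) :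
    shiftedCasimir k M h e f ⁅h, m⁆ = ⁅h, shiftedCasimir k M h e f m⁆ := by
  have h₁ (m : M) : ⁅h, ⁅e, m⁆⁆ = ⁅e, ⁅h, m⁆⁆ + (2 : k) • ⁅e, m⁆ := by
    rw [leibniz_lie, ht.lie_h_e_smul k, smul_lie, add_comm]
  have h₂ (m : M) : ⁅h, ⁅f, m⁆⁆ = ⁅f, ⁅h, m⁆⁆ - (2 : k) • ⁅f, m⁆ := by
    rw [leibniz_lie, ht.lie_lie_smul_f k, neg_lie, smul_lie]; abel
  simp only [shiftedCasimir_apply, lie_add, lie_smul, h₂, h₁]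
  module

lemma shiftedCasimir_lie_e (ht : IsSl2Triple h e f) (m : M) :
    shiftedCasimir k M h e f ⁅e, m⁆ = ⁅e, shiftedCasimir k M h e f m⁆ := by
  have h₁ (m : M) : ⁅h, ⁅e, m⁆⁆ = ⁅e, ⁅h, m⁆⁆ + (2 : k) • ⁅e, m⁆ := by
    rw [leibniz_lie, ht.lie_h_e_smul k, smul_lie, add_comm]
  have h₂ (m : M) : ⁅e, ⁅f, m⁆⁆ = ⁅h, m⁆ + ⁅f, ⁅e, m⁆⁆ := by rw [leibniz_lie, ht.lie_e_f]
  simp only [shiftedCasimir_apply, lie_add, lie_smul, h₂, h₁]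
  module

lemma shiftedCasimir_pow_toEnd_e (ht : IsSl2Triple h e f) (n : ℕ) (m : M) :
    shiftedCasimir k M h e f ((LieModule.toEnd k L M e ^ n) m) =
      (LieModule.toEnd k L M e ^ n) (shiftedCasimir k M h e f m) := by
  induction n generalizing m with
  | zero => simp
  | succ n ih => simp [pow_succ, ih, ht.shiftedCasimir_lie_e]

lemma smul_pow_f_pow_e (ht : IsSl2Triple h e f) (n : ℕ) {m : M} (hm : ⁅h, ⁅h, m⁆⁆ = 0) :
    (4 ^ n : k) • (LieModule.toEnd k L M f ^ n) ((LieModule.toEnd k L M e ^ n) m) =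
      aeval (shiftedCasimir k M h e f) (casimirPoly k n) m -
        (2 : k) • aeval (shiftedCasimir k M h e f) (casimirPolyDeriv k n) ⁅h, m⁆ := by
  induction n generalizing m with
  | zero => simp [casimirPoly, casimirPolyDeriv]
  | succ n ih =>
    set D := shiftedCasimir k M h e f with hD
    have key : (4 : k) • ⁅f, ⁅e, (LieModule.toEnd k L M e ^ n) m⁆⁆ =
        (LieModule.toEnd k L M e ^ n)
          (D m - ((2 * n + 1 : k) ^ 2) • m - (2 * (2 * n + 1) : k) • ⁅h, m⁆) := by
      have h₁ := shiftedCasimir_apply (k := k) h e f ((LieModule.toEnd k L M e ^ n) m)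
      rw [ht.shiftedCasimir_pow_toEnd_e, ht.lie_h_pow_toEnd_e_apply, ht.lie_h_pow_toEnd_e_apply] at h₁
      simp only [lie_add, lie_smul, hm, map_add, map_smul, map_zero] at h₁
      simp only [map_sub, map_smul, hD, h₁]
      module
    have hDh : ⁅h, D m⁆ = D ⁅h, m⁆ := (ht.shiftedCasimir_lie_h m).symm
    have hm' : ⁅h, ⁅h, D m - ((2 * n + 1 : k) ^ 2) • m - (2 * (2 * n + 1) : k) • ⁅h, m⁆⁆⁆ = 0 := by
      have hDhh : ⁅h, D ⁅h, m⁆⁆ = 0 := by rw [hD, ← ht.shiftedCasimir_lie_h, hm, map_zero]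
      simp [hDh, hm, hDhh]
    have hstep : (4 ^ (n + 1) : k) •
        (LieModule.toEnd k L M f ^ (n + 1)) ((LieModule.toEnd k L M e ^ (n + 1)) m) =
        (4 ^ n : k) • (LieModule.toEnd k L M f ^ n)
          ((4 : k) • ⁅f, ⁅e, (LieModule.toEnd k L M e ^ n) m⁆⁆) := by
      rw [pow_succ (LieModule.toEnd k L M f), pow_succ' (LieModule.toEnd k L M e), map_smul,
        smul_smul, pow_succ]
      rfl
    rw [hstep, key, ih hm', casimirPoly_succ, casimirPolyDeriv]
    simp only [lie_sub, lie_smul, hDh, hm, map_mul, map_add, map_sub, aeval_X, aeval_C,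
      Module.End.mul_apply, LinearMap.add_apply, LinearMap.sub_apply, map_smul,
      Module.algebraMap_end_apply, smul_zero, sub_zero]
    module

variable (k) [CharZero k] [FiniteDimensional k M]

lemma exists_pow_toEnd_e_eq_zero_s5 (ht : IsSl2Triple h e f) :
    ∃ n, LieModule.toEnd k L M e ^ n = 0 := by
  by_contra! hne
  let A : End k (End k M) := LinearMap.mulLeft k (LieModule.toEnd k L M h) -
    LinearMap.mulRight k (LieModule.toEnd k L M h)
  have hA (n : ℕ) : A.HasEigenvalue (2 * n : k) := by
    refine End.hasEigenvalue_of_hasEigenvector (x := LieModule.toEnd k L M e ^ n)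
      ⟨End.mem_eigenspace_iff.mpr ?_, hne n⟩
    ext m
    have := ht.lie_h_pow_toEnd_e_apply (k := k) n m
    simp [A, this]
  refine Set.infinite_of_injective_forall_mem (f := fun n : ℕ ↦ (2 * n : k)) ?_ hA
    A.finite_hasEigenvalue
  intro a b hab
  simpa using hab

/-- In a finite-dimensional representation in characteristic zero, the generalized
zero-eigenspace of `h` is the zero-eigenspace. -/
lemma lie_h_eq_zero_of_lie_h_lie_h_eq_zero (k : Type*) [Field k] [CharZero k] {L M : Type*}
    [LieRing L] [LieAlgebra k L] [AddCommGroup M] [Module k M] [LieRingModule L M]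
    [LieModule k L M] [FiniteDimensional k M] {h e f : L} (ht : IsSl2Triple h e f) {m : M}
    (hm : ⁅h, ⁅h, m⁆⁆ = 0) : ⁅h, m⁆ = 0 := by
  obtain ⟨a, ha⟩ := ht.exists_pow_toEnd_e_eq_zero_s5 k (M := M)
  obtain ⟨b, hb⟩ := ht.symm.exists_pow_toEnd_e_eq_zero_s5 k (M := M)
  set n := a + b
  have he : LieModule.toEnd k L M e ^ n = 0 := by rw [pow_add, ha, zero_mul]
  have hf : LieModule.toEnd k L M f ^ n = 0 := by rw [pow_add, hb, mul_zero]
  set D := shiftedCasimir k M h e f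
  have h₁ {m : M} (hm : ⁅h, ⁅h, m⁆⁆ = 0) : aeval D (casimirPoly k n) m -
      (2 : k) • aeval D (casimirPolyDeriv k n) ⁅h, m⁆ = 0 := by
    rw [← ht.smul_pow_f_pow_e n hm]; simp [he]
  have h₂ : aeval D (casimirPoly k n) m +
      (2 : k) • aeval D (casimirPolyDeriv k n) ⁅h, m⁆ = 0 := by
    have := ht.symm.smul_pow_f_pow_e (k := k) n (m := m) (by simpa using hm)
    rw [ht.shiftedCasimir_symm] at this
    simpa [hf] using this.symm
  have hQ : aeval D (casimirPolyDeriv k n) ⁅h, m⁆ = 0 := by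
    have h₃ : (4 : k) • aeval D (casimirPolyDeriv k n) ⁅h, m⁆ = 0 := by
      linear_combination (norm := module) h₂ - h₁ hm
    exact (smul_eq_zero_iff_right (by norm_num)).mp h₃
  have hP : aeval D (casimirPoly k n) ⁅h, m⁆ = 0 := by
    simpa [hm] using h₁ (m := ⁅h, m⁆) (by simp [hm])
  obtain ⟨u, v, huv⟩ := isCoprime_casimirPoly_casimirPolyDeriv k n
  have := congr(aeval D $huv ⁅h, m⁆)
  simpa [hP, hQ] using this.symm

end IsSl2Triple

namespace LieAlgebra

variable {k L : Type*} [Field k] [LieRing L] [LieAlgebra k L] [FiniteDimensional k L]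

/-- The image of `ad x` is the Killing-orthogonal complement of the centralizer of `x`. -/
lemma exists_lie_eq_iff_killingForm_eq_zero (hKilling : (killingForm k L).Nondegenerate)
    (x w : L) : (∃ z, ⁅x, z⁆ = w) ↔ ∀ y, ⁅x, y⁆ = 0 → killingForm k L w y = 0 := by
  have hinv (z y : L) : killingForm k L ⁅x, z⁆ y = - killingForm k L z ⁅x, y⁆ := by
    rw [LieModule.traceForm_apply_lie_apply']
  have hrefl : (killingForm k L).IsRefl := (LieModule.traceForm_isSymm k L L).isRefl
  refine ⟨?_, fun hw ↦ ?_⟩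
  · rintro ⟨z, rfl⟩ y hy
    rw [hinv, hy, map_zero, neg_zero]
  · change w ∈ LinearMap.range (ad k L x)
    rw [← LinearMap.BilinForm.orthogonal_orthogonal hKilling hrefl (LinearMap.range (ad k L x)),
      LinearMap.BilinForm.mem_orthogonal_iff]
    intro y hy
    refine hrefl _ _ (hw y (hKilling.2 _ fun z ↦ ?_))
    rw [← neg_eq_zero, ← hinv]
    exact hy ⁅x, z⁆ ⟨z, rfl⟩

end LieAlgebra

/-- Let `𝔤` have nondegenerate Killing form, `(h,e,f)` be an sl₂-triple, and `x` satisfy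
`⁅h,x⁆ = 4x`.  Then `h ∈ Im(ad x)` iff `κ(h,y) = 0` for all `y` with `⁅x,y⁆ = 0` and
`⁅h,y⁆ = 0`. -/
theorem stmt_5 {k : Type*} [Field k] [CharZero k]
    {L : Type*} [LieRing L] [LieAlgebra k L] [FiniteDimensional k L]
    (hKilling : (killingForm k L).Nondegenerate)
    {h e f : L} (ht : IsSl2Triple h e f)
    {x : L} (hx : ⁅h, x⁆ = (4 : k) • x) :
    (∃ z : L, ⁅x, z⁆ = h) ↔
      ∀ y : L, ⁅x, y⁆ = 0 → ⁅h, y⁆ = 0 → killingForm k L h y = 0 := by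
  rw [exists_lie_eq_iff_killingForm_eq_zero hKilling]
  refine ⟨fun H y hy _ ↦ H y hy, fun H y hy ↦ ?_⟩
  let K : Submodule k L := LinearMap.ker (ad k L x)
  have hstable : ∀ y ∈ K, ad k L h y ∈ K := by
    intro y hy
    have hy' : ⁅x, y⁆ = 0 := hy
    have hxh : ⁅x, h⁆ = -((4 : k) • x) := by rw [← lie_skew, hx]
    change ⁅x, ⁅h, y⁆⁆ = 0
    rw [leibniz_lie, hxh, hy', neg_lie, smul_lie, hy', lie_zero, smul_zero, neg_zero, add_zero]
  let T : End k K := (ad k L h).restrict hstable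
  have hdisj : Disjoint (LinearMap.ker T) (LinearMap.range T) := by
    rw [Submodule.disjoint_def]
    rintro _ hu ⟨v, rfl⟩
    have hv : ⁅h, ⁅h, (v : L)⁆⁆ = 0 := congr(($hu : L))
    exact Subtype.ext (ht.lie_h_eq_zero_of_lie_h_lie_h_eq_zero k hv)
  have htop : LinearMap.ker T ⊔ LinearMap.range T = ⊤ := by
    refine Submodule.eq_top_of_disjoint _ _ ?_ hdisj
    rw [add_comm, T.finrank_range_add_finrank_ker]
  obtain ⟨a, ha, _, ⟨b, rfl⟩, hab⟩ :=
    Submodule.mem_sup.mp (htop ▸ Submodule.mem_top : (⟨y, hy⟩ : K) ∈ _)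
  have hy_eq : y = a + ⁅h, (b : L)⁆ := congr(($hab : L)).symm
  have hah : ⁅h, (a : L)⁆ = 0 := congr(($ha : L))
  have hhb : killingForm k L h ⁅h, (b : L)⁆ = 0 := by
    rw [← LieModule.traceForm_apply_lie_apply, lie_self, map_zero, LinearMap.zero_apply]
  rw [hy_eq, map_add, H a a.2 hah, hhb, add_zero]
end

section
/- Let 𝔤 be a finite-dimensional Lie algebra over a field of characteristic 0, let (h,e,f) be an sl₂-triple in 𝔤, and let x ∈ 𝔤 satisfy ⁅h,x⁆ = 4x. Then for every natural number m ≥ 1, if (ad e)^{2m} = 0 then (ad x)^m = 0. (In other words, the height of any element of the eigenspace 𝔤(4) is at most half the height of e.) -/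
open LieAlgebra Module

open Polynomial in
/-- The monoid of monic polynomials that split with all roots integers in `[a, b]`. -/
noncomputable def integerRooted (k : Type*) [Field k] (a b : ℤ) : Submonoid k[X] :=
  Submonoid.closure {p | ∃ j : ℤ, a ≤ j ∧ j ≤ b ∧ p = X - C (j : k)}

namespace integerRooted

open Polynomial

variable {k : Type*} [Field k] {a b c d : ℤ} {p q : k[X]}

lemma X_sub_C_mem {j : ℤ} (ha : a ≤ j) (hb : j ≤ b) : X - C (j : k) ∈ integerRooted k a b :=
  Submonoid.subset_closure ⟨j, ha, hb, rfl⟩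

lemma mono (hca : c ≤ a) (hbd : b ≤ d) : integerRooted k a b ≤ integerRooted k c d :=
  Submonoid.closure_mono fun _ ⟨j, hj, hj', hp⟩ ↦ ⟨j, hca.trans hj, hj'.trans hbd, hp⟩

lemma comp_X_sub_C_mem (hp : p ∈ integerRooted k a b) (t : ℤ) :
    p.comp (X - C (t : k)) ∈ integerRooted k (a + t) (b + t) := by
  induction hp using Submonoid.closure_induction with
  | mem p hp =>
    obtain ⟨j, hj, hj', rfl⟩ := hp
    convert X_sub_C_mem (k := k) (j := j + t) (by lia : a + t ≤ j + t) (by lia : j + t ≤ b + t)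
      using 1
    simp only [sub_comp, X_comp, C_comp, Int.cast_add, C_add]
    ring
  | one => simp
  | mul p q _ _ hp hq => simpa using mul_mem hp hq

lemma isCoprime [CharZero k] (hp : p ∈ integerRooted k a b) (hq : q ∈ integerRooted k c d)
    (hbc : b < c) : IsCoprime p q := by
  induction hp using Submonoid.closure_induction with
  | mem p hp =>
    obtain ⟨i, -, hi, rfl⟩ := hp
    induction hq using Submonoid.closure_induction with
    | mem q hq =>
      obtain ⟨j, hj, -, rfl⟩ := hq
      refine isCoprime_X_sub_C_of_isUnit_sub (sub_ne_zero_of_ne ?_).isUnit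
      exact_mod_cast (by lia : i ≠ j)
    | one => exact isCoprime_one_right
    | mul p q _ _ hp hq => exact hp.mul_right hq
  | one => exact isCoprime_one_left
  | mul p q _ _ hp hq => exact hp.mul_left hq

end integerRooted

section AssociativeAlgebra

open Polynomial

variable {k A : Type*} [Field k] [Ring A] [Algebra k A] {H E F : A}

/-- If `y` is an eigenvector of `[H, ·]` with eigenvalue `c`, then `p(H - c) y = y p(H)`. -/
lemma aeval_comp_mul_of_weight {y : A} {c : k} (hy : H * y = y * (H + algebraMap k A c))
    (p : k[X]) : aeval H (p.comp (X - C c)) * y = y * aeval H p := by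
  induction p using Polynomial.induction_on' with
  | add p q hp hq => simp [add_mul, mul_add, hp, hq]
  | monomial n r =>
    have hsemi : SemiconjBy y H (H - algebraMap k A c) := by
      rw [SemiconjBy, sub_mul, hy, mul_add, Algebra.commutes c y, add_sub_cancel_right]
    have h1 := (hsemi.pow_right n).eq
    simp only [monomial_comp, map_mul, aeval_C, map_pow, map_sub, aeval_X, aeval_monomial]
    rw [mul_assoc, ← h1, ← mul_assoc, ← mul_assoc, Algebra.commutes]

lemma weight_pow {y : A} {c : k} (hy : H * y = y * (H + algebraMap k A c)) (n : ℕ) :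
    H * y ^ n = y ^ n * (H + algebraMap k A (n * c)) := by
  induction n with
  | zero => simp
  | succ n ih =>
    rw [pow_succ, ← mul_assoc, ih, mul_assoc, add_mul, hy, Algebra.commutes _ y, ← mul_add,
      mul_assoc, add_assoc, ← map_add]
    rw [Nat.cast_succ, add_one_mul, add_comm c]

lemma pow_succ_mul_sub_mul_pow_succ (hE : H * E = E * (H + algebraMap k A 2))
    (hEF : E * F - F * E = H) (r : ℕ) :
    E ^ (r + 1) * F - F * E ^ (r + 1) = ((r : k) + 1) • (E ^ r * (H + algebraMap k A r)) := by
  induction r with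
  | zero => simp [hEF]
  | succ r ih =>
    have split : E ^ (r + 1 + 1) * F - F * E ^ (r + 1 + 1) =
        E * (E ^ (r + 1) * F - F * E ^ (r + 1)) + (E * F - F * E) * E ^ (r + 1) := by
      rw [pow_succ' E (r + 1)]
      noncomm_ring
    rw [split, ih, hEF, weight_pow hE, mul_smul_comm, ← mul_assoc, ← pow_succ']
    simp only [Algebra.algebraMap_eq_smul_one, mul_add, smul_add, mul_smul_comm, mul_one,
      smul_smul, Nat.cast_add, Nat.cast_one]
    module

/-- If `E ^ n = 0` in a representation of `sl₂`, then `E ^ r` is killed by a polynomial in `H`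
with integer roots in an interval depending on `r ≤ n`. -/
lemma exists_integerRooted_pow_mul_aeval_eq_zero [CharZero k]
    (hE : H * E = E * (H + algebraMap k A 2)) (hF : H * F = F * (H + algebraMap k A (-2)))
    (hEF : E * F - F * E = H) (s r : ℕ) (hn : E ^ (r + s) = 0) :
    ∃ p ∈ integerRooted k (1 - r - s) (s - r - 1), E ^ r * aeval H p = 0 := by
  induction s generalizing r with
  | zero => exact ⟨1, one_mem _, by simpa using hn⟩
  | succ s ih =>
    obtain ⟨p, hp, hpE⟩ := ih (r + 1) (by rw [← hn]; congr 1; lia)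
    have hcomp := aeval_comp_mul_of_weight hF (p.comp (X - C (2 : k)))
    have hshift : (p.comp (X - C (2 : k))).comp (X - C (-2)) = p := by simp [comp_assoc]
    rw [hshift] at hcomp
    set q := p.comp (X - C (2 : k)) with hq
    have hq_mem := integerRooted.comp_X_sub_C_mem hp 2
    rw [Int.cast_ofNat, ← hq] at hq_mem
    refine ⟨(X - C ((-r : ℤ) : k)) * (p * q), mul_mem ?_ (mul_mem ?_ ?_), ?_⟩
    · exact integerRooted.X_sub_C_mem (by lia) (by lia)
    · exact integerRooted.mono (by lia) (by lia) hp
    · exact integerRooted.mono (by lia) (by lia) hq_mem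
    have hEFq : E ^ (r + 1) * F * aeval H q = 0 := by
      rw [mul_assoc, ← hcomp, ← mul_assoc, hpE, zero_mul]
    have key : (E ^ (r + 1) * F - F * E ^ (r + 1)) * aeval H (p * q) = 0 := by
      have hEFpq : E ^ (r + 1) * F * aeval H (p * q) = 0 := by
        rw [mul_comm p q, map_mul, ← mul_assoc, hEFq, zero_mul]
      have hFEpq : F * E ^ (r + 1) * aeval H (p * q) = 0 := by
        rw [map_mul, ← mul_assoc, mul_assoc F, hpE, mul_zero, zero_mul]
      rw [sub_mul, hEFpq, hFEpq, sub_zero]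
    rw [pow_succ_mul_sub_mul_pow_succ hE hEF, smul_mul_assoc, smul_eq_zero] at key
    have := key.resolve_left (by exact_mod_cast r.succ_ne_zero)
    simpa [mul_assoc] using this

/-- In a representation of `sl₂` on which `E ^ n = 0`, a weight vector of the endomorphism algebra
whose weight is at least `2 n - 1` vanishes. -/
lemma eq_zero_of_weight_of_pow_eq_zero [CharZero k]
    (hE : H * E = E * (H + algebraMap k A 2)) (hF : H * F = F * (H + algebraMap k A (-2)))
    (hEF : E * F - F * E = H) {n : ℕ} (hn : E ^ n = 0) {y : A} {w : ℤ}
    (hy : H * y = y * (H + algebraMap k A w)) (hw : 2 * n - 1 ≤ w) : y = 0 := by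
  obtain ⟨p, hp, hpH⟩ :=
    exists_integerRooted_pow_mul_aeval_eq_zero hE hF hEF n 0 (by rwa [zero_add])
  rw [pow_zero, one_mul] at hpH
  obtain ⟨u, v, huv⟩ := integerRooted.isCoprime hp
    (integerRooted.comp_X_sub_C_mem hp w) (by push_cast; lia)
  have hshift := aeval_comp_mul_of_weight hy p
  rw [hpH, mul_zero] at hshift
  have := congrArg (fun z ↦ aeval H z * y) huv
  simpa only [map_add, map_mul, map_one, add_mul, mul_assoc, hpH, hshift, mul_zero, zero_mul,
    add_zero, one_mul] using this.symm

end AssociativeAlgebra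

lemma ad_mul_ad_of_lie_eq_smul {k L : Type*} [Field k] [LieRing L] [LieAlgebra k L] {h y : L}
    {c : k} (hy : ⁅h, y⁆ = c • y) :
    ad k L h * ad k L y = ad k L y * (ad k L h + algebraMap k (End k L) c) := by
  ext z
  simp [leibniz_lie h y z, hy, add_comm]

/-- Let `(h,e,f)` be an sl₂-triple and `x` satisfy `⁅h,x⁆ = 4x`.  Then for all `m ≥ 1`,
if `(ad e)^(2m) = 0` then `(ad x)^m = 0`: the height of any element of `𝔤(4)` is at most
half the height of `e`. -/
theorem stmt_6 {k : Type*} [Field k] [CharZero k]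
    {L : Type*} [LieRing L] [LieAlgebra k L] [FiniteDimensional k L]
    {h e f : L} (ht : IsSl2Triple h e f)
    {x : L} (hx : ⁅h, x⁆ = (4 : k) • x) :
    ∀ m : ℕ, 1 ≤ m → (ad k L e) ^ (2 * m) = 0 → (ad k L x) ^ m = 0 := by
  intro m _ hm
  have hEF : ad k L e * ad k L f - ad k L f * ad k L e = ad k L h := by
    ext z
    simp [← ht.lie_e_f]
  have hy := weight_pow (ad_mul_ad_of_lie_eq_smul hx) m
  refine eq_zero_of_weight_of_pow_eq_zero (w := m * 4)
    (ad_mul_ad_of_lie_eq_smul (ht.lie_h_e_smul k))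
    (ad_mul_ad_of_lie_eq_smul (by rw [ht.lie_lie_smul_f k, neg_smul])) hEF hm ?_ ?_
  · exact_mod_cast hy
  · push_cast
    lia
end
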